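/- Let g : ℝ/ℤ → ℝ be an integrable function and N ≥ 1 an integer. Then 2^{−N} · Σ_{θ ∈ {±1}^N} ( det( I + D_N(θ)·T_N(g) ) )² = Σ_{J ⊆ {1,…,N}} ( det T_J(g) )², where the sum on the right runs over all subsets J of {1,…,N} (with det T_∅(g) := 1). -/

import Mathlib

open MeasureTheory Matrix

/-- The `n`-th Fourier coefficient of a function on the circle `ℝ/ℤ`. -/
noncomputable def fhat (g : AddCircle (1:ℝ) → ℝ) (n : ℤ) : ℂ :=
  fourierCoeff (fun t => (g t : ℂ)) n

/-- A sign `±1` (as a complex number) encoded by a boolean. -/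
def pm (b : Bool) : ℂ := if b then 1 else -1

/-- The `N×N` Toeplitz matrix `T_N(g) = (ĝ(i-j))_{1 ≤ i,j ≤ N}`. -/
noncomputable def Tmat (g : AddCircle (1:ℝ) → ℝ) (N : ℕ) : Matrix (Fin N) (Fin N) ℂ :=
  Matrix.of fun i j => fhat g (((i : ℕ) : ℤ) - ((j : ℕ) : ℤ))

/-- The submatrix `T_J(g) = (ĝ(i-j))_{i,j ∈ J}` of `T_N(g)`. -/
noncomputable def Tsub (g : AddCircle (1:ℝ) → ℝ) {N : ℕ} (J : Finset (Fin N)) :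
    Matrix J J ℂ :=
  Matrix.of fun i j => fhat g ((((i : Fin N) : ℕ) : ℤ) - (((j : Fin N) : ℕ) : ℤ))

/-!
Expanding `det (1 + D(θ) * M)` along its rows gives the Walsh expansion
`∑ J, (∏ i ∈ J, θ i) * det M_J` in terms of the principal minors `M_J`. The monomials
`∏ i ∈ J, θ i` are orthogonal under averaging over independent centred variables `θ i` of unit
variance, so the second moment is a Parseval sum.
-/

section PrincipalMinors

variable {l m n R : Type*} [DecidableEq m] [Fintype m] [DecidableEq n] [Fintype n] [CommRing R]

lemma det_one_add_eq_sum_det_submatrix (M : Matrix n n R) :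
    (1 + M).det = ∑ s : Finset n, (M.submatrix (Subtype.val : s → n) Subtype.val).det := by
  rw [add_comm]
  calc (M + 1).det
      = ∑ s : Finset n, (Matrix.of (s.piecewise M.row (1 : Matrix n n R).row)).det :=
        detRowAlternating.map_add_univ M.row (1 : Matrix n n R).row
    _ = ∑ s : Finset n, (M.submatrix (Subtype.val : s → n) Subtype.val).det :=
        Finset.sum_congr rfl fun s _ ↦ det_piecewise_one_eq_submatrix_det M s

lemma det_submatrix_diagonal_mul (d : n → R) (M : Matrix n l R) (f : m → n) (g : m → l) :
    ((diagonal d * M).submatrix f g).det = (∏ i, d (f i)) * (M.submatrix f g).det := by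
  rw [← det_mul_column]
  congr 1
  ext i j
  simp only [submatrix_apply, diagonal_mul, of_apply]

lemma det_one_add_diagonal_mul (d : n → R) (M : Matrix n n R) :
    (1 + diagonal d * M).det =
      ∑ s : Finset n, (∏ i ∈ s, d i) * (M.submatrix (Subtype.val : s → n) Subtype.val).det := by
  simp only [det_one_add_eq_sum_det_submatrix, det_submatrix_diagonal_mul, Finset.prod_coe_sort]

end PrincipalMinors

section Orthogonality

variable {n β R : Type*} [DecidableEq n] [Fintype n] [Fintype β] [CommSemiring R]

lemma sum_prod_mul_prod_eq_prod_sum (ε : β → R) (s t : Finset n) :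
    ∑ θ : n → β, (∏ i ∈ s, ε (θ i)) * ∏ i ∈ t, ε (θ i) =
      ∏ i, ∑ b, (if i ∈ s then ε b else 1) * (if i ∈ t then ε b else 1) := by
  simp only [Fintype.prod_sum, Finset.prod_mul_distrib, Fintype.prod_ite_mem]

variable {ε : β → R}

lemma sum_prod_mul_prod_eq_ite (hε : ∑ b, ε b = 0) (hε_sq : ∑ b, ε b ^ 2 = Fintype.card β)
    (s t : Finset n) :
    ∑ θ : n → β, (∏ i ∈ s, ε (θ i)) * ∏ i ∈ t, ε (θ i) =
      if s = t then (Fintype.card β : R) ^ Fintype.card n else 0 := by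
  rw [sum_prod_mul_prod_eq_prod_sum]
  split_ifs with hst
  · subst hst
    have factor_eq_card (i : n) :
        ∑ b, (if i ∈ s then ε b else 1) * (if i ∈ s then ε b else 1) = Fintype.card β := by
      by_cases hi : i ∈ s <;> simp [hi, ← sq, hε_sq]
    simp only [factor_eq_card, Finset.prod_const, Finset.card_univ]
  · obtain ⟨i, hi⟩ : ∃ i, ¬(i ∈ s ↔ i ∈ t) := by simpa [Finset.ext_iff] using hst
    refine Finset.prod_eq_zero (Finset.mem_univ i) ?_
    by_cases his : i ∈ s <;> by_cases hit : i ∈ t <;> simp_all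

lemma sum_sq_sum_prod_mul (hε : ∑ b, ε b = 0) (hε_sq : ∑ b, ε b ^ 2 = Fintype.card β)
    (a : Finset n → R) :
    ∑ θ : n → β, (∑ s, (∏ i ∈ s, ε (θ i)) * a s) ^ 2 =
      (Fintype.card β : R) ^ Fintype.card n * ∑ s, a s ^ 2 := by
  calc ∑ θ : n → β, (∑ s, (∏ i ∈ s, ε (θ i)) * a s) ^ 2
      = ∑ s, ∑ t, (∑ θ : n → β, (∏ i ∈ s, ε (θ i)) * ∏ i ∈ t, ε (θ i)) * (a s * a t) := by
        simp_rw [sq, Finset.sum_mul_sum, Finset.sum_mul, ← mul_mul_mul_comm]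
        rw [Finset.sum_comm]
        exact Finset.sum_congr rfl fun s _ ↦ Finset.sum_comm
    _ = (Fintype.card β : R) ^ Fintype.card n * ∑ s, a s ^ 2 := by
        simp only [sum_prod_mul_prod_eq_ite hε hε_sq, ite_mul, zero_mul, Finset.sum_ite_eq,
          Finset.mem_univ, if_true, ← sq, Finset.mul_sum]

end Orthogonality

theorem average_det_sq_eq_sum_subsets_general {n β R : Type*} [DecidableEq n] [Fintype n]
    [Fintype β] [CommRing R] {ε : β → R} (hε : ∑ b, ε b = 0)
    (hε_sq : ∑ b, ε b ^ 2 = Fintype.card β) (M : Matrix n n R) :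
    ∑ θ : n → β, (1 + diagonal (fun i ↦ ε (θ i)) * M).det ^ 2 =
      (Fintype.card β : R) ^ Fintype.card n *
        ∑ J : Finset n, (M.submatrix (Subtype.val : J → n) Subtype.val).det ^ 2 := by
  simp only [det_one_add_diagonal_mul]
  exact sum_sq_sum_prod_mul hε hε_sq _

lemma sum_pm : ∑ b, pm b = 0 := by
  simp [pm]

lemma sum_pm_sq : ∑ b, pm b ^ 2 = Fintype.card Bool := by
  norm_num [pm]

lemma submatrix_Tmat (g : AddCircle (1 : ℝ) → ℝ) {N : ℕ} (J : Finset (Fin N)) :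
    (Tmat g N).submatrix (Subtype.val : J → Fin N) Subtype.val = Tsub g J :=
  rfl

/-- `2^{-N} Σ_{θ ∈ {±1}^N} det(I + D_N(θ)T_N(g))² = Σ_{J ⊆ [N]} det(T_J(g))²`. -/
theorem average_det_sq_eq_sum_subsets
    (g : AddCircle (1:ℝ) → ℝ) (hint : Integrable g) (N : ℕ) (hN : 1 ≤ N) :
    ((2 : ℂ) ^ N)⁻¹ *
        ∑ θ : Fin N → Bool,
          ((1 + Matrix.diagonal (fun i => pm (θ i)) * Tmat g N).det) ^ 2 =
      ∑ J : Finset (Fin N), ((Tsub g J).det) ^ 2 := by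
  rw [inv_mul_eq_iff_eq_mul₀ (pow_ne_zero N two_ne_zero)]
  simpa only [Fintype.card_bool, Fintype.card_fin, Nat.cast_ofNat, submatrix_Tmat] using
    average_det_sq_eq_sum_subsets_general sum_pm sum_pm_sq (Tmat g N)
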